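/- arXiv:2312.10710 — 2 statements merged into one kernel-verified Lean document; each statement's English description precedes it below -/
import Mathlib

section
/- For real parameters θ¹, θ² with θ¹+θ² > 0 and θ¹−θ² > 0, the third central moment of the beta-logistic distribution is ∫_{ℝ} (x − μ)³ · p(x;θ¹,θ²) dx = (1/8)·(ψ''((θ¹+θ²)/2) − ψ''((θ¹−θ²)/2)), where μ = (1/2)(ψ((θ¹+θ²)/2) − ψ((θ¹−θ²)/2)). -/
open MeasureTheory

/-- The hyperbolic secant function: `sech x = 2 / (eˣ + e⁻ˣ)`. -/
noncomputable def sech (x : ℝ) : ℝ := 1 / Real.cosh x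

/-- The beta-logistic density. -/
noncomputable def betaLogisticPDF (θ1 θ2 x : ℝ) : ℝ :=
  (2 : ℝ) ^ (1 - θ1) * sech x ^ θ1 * Real.exp (θ2 * x) /
    (Real.Gamma ((θ1 - θ2) / 2) * Real.Gamma ((θ1 + θ2) / 2) / Real.Gamma θ1)

/-- The digamma function `ψ(z) = d/dz log Γ(z)`. -/
noncomputable def digamma (z : ℝ) : ℝ := deriv (fun x => Real.log (Real.Gamma x)) z

/-- The tetragamma function `ψ''(z) = d³/dz³ log Γ(z)`. -/
noncomputable def tetragamma (z : ℝ) : ℝ := iteratedDeriv 3 (fun x => Real.log (Real.Gamma x)) z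

/-!
For fixed `θ1` the beta-logistic densities form an exponential family in `θ2`, and the substitution
`u = sigmoid (2 * x)` turns them into beta densities, so that their normalizing constant is
`B((θ1 + θ2) / 2, (θ1 - θ2) / 2)`. Tilting by `exp (t * x)` shifts `θ2` to `θ2 + t`; hence the
moment generating function is a ratio of Beta functions, and the cumulant generating function is,
up to a constant, `log Γ((θ1 + θ2 + t) / 2) + log Γ((θ1 - θ2 - t) / 2)`. Its `n`-th derivative at
`t = 0` is the `n`-th cumulant; the first cumulant is the mean and the third one is the third
central moment.
-/

open Filter ProbabilityTheory Set Topology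

section IteratedDeriv

theorem iteratedDeriv_comp_const_add_mul {𝕜 F : Type*} [NontriviallyNormedField 𝕜]
    [NormedAddCommGroup F] [NormedSpace 𝕜 F] (n : ℕ) (f : 𝕜 → F) (a c x : 𝕜) :
    iteratedDeriv n (fun y => f (a + c * y)) x = c ^ n • iteratedDeriv n f (a + c * x) := by
  induction n generalizing x with
  | zero => simp
  | succ n ih =>
    rw [iteratedDeriv_succ, funext ih, deriv_fun_const_smul_field,
      deriv_comp_mul_left c (fun y => iteratedDeriv n f (a + y)), deriv_comp_const_add,
      ← iteratedDeriv_succ, smul_smul, ← pow_succ]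

theorem iteratedDeriv_succ_real_log (n : ℕ) (x : ℝ) :
    iteratedDeriv (n + 1) Real.log x = (-1) ^ n * n.factorial * x ^ (-1 - n : ℤ) := by
  rw [iteratedDeriv_succ', Real.deriv_log', iteratedDeriv_eq_iterate, ← iter_deriv_inv]

end IteratedDeriv

section Cumulants

variable {Ω : Type*} [MeasurableSpace Ω] {X : Ω → ℝ} {ν : Measure Ω} {v : ℝ}

theorem integral_sub_pow_mul_exp (hv : v ∈ interior (integrableExpSet X ν)) (c : ℝ) (n : ℕ) :
    ∫ ω, (X ω - c) ^ n * Real.exp (v * X ω) ∂ν =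
      ∑ k ∈ Finset.range (n + 1),
        (-c) ^ (n - k) * n.choose k * ∫ ω, X ω ^ k * Real.exp (v * X ω) ∂ν := by
  have hX (k : ℕ) : Integrable (fun ω => X ω ^ k * Real.exp (v * X ω)) ν :=
    integrable_pow_mul_exp_of_mem_interior_integrableExpSet hv k
  simp_rw [← integral_const_mul]
  rw [← integral_finsetSum _ fun k _ => (hX k).const_mul _]
  congr with ω
  rw [sub_eq_add_neg, add_pow, Finset.sum_mul]
  exact Finset.sum_congr rfl fun k _ => by ring

theorem iteratedDeriv_three_cgf (hv : v ∈ interior (integrableExpSet X ν)) (hν : ν ≠ 0) :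
    iteratedDeriv 3 (cgf X ν) v =
      iteratedDeriv 3 (mgf X ν) v / mgf X ν v -
        3 * iteratedDeriv 2 (mgf X ν) v * deriv (mgf X ν) v / mgf X ν v ^ 2 +
        2 * deriv (mgf X ν) v ^ 3 / mgf X ν v ^ 3 := by
  have hpos : 0 < mgf X ν v := mgf_pos' hν (interior_subset (s := integrableExpSet X ν) hv)
  have hlog : ContDiffAt ℝ 3 Real.log (mgf X ν v) := Real.contDiffAt_log.2 hpos.ne'
  have hlog_two : iteratedDeriv 2 Real.log (mgf X ν v) = -1 / mgf X ν v ^ 2 := by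
    norm_num [iteratedDeriv_succ_real_log, zpow_neg, neg_div]
  have hlog_three : iteratedDeriv 3 Real.log (mgf X ν v) = 2 / mgf X ν v ^ 3 := by
    norm_num [iteratedDeriv_succ_real_log, zpow_neg, div_eq_mul_inv]
  change iteratedDeriv 3 (Real.log ∘ mgf X ν) v = _
  rw [iteratedDeriv_comp_three hlog (analyticAt_mgf hv).contDiffAt, hlog_two, hlog_three,
    Real.deriv_log]
  field_simp
  ring

theorem iteratedDeriv_three_cgf_eq_integral (hv : v ∈ interior (integrableExpSet X ν)) :
    iteratedDeriv 3 (cgf X ν) v =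
      (∫ ω, (X ω - deriv (cgf X ν) v) ^ 3 * Real.exp (v * X ω) ∂ν) / mgf X ν v := by
  by_cases hν : ν = 0
  · simp [hν]
  have hpos : 0 < mgf X ν v := mgf_pos' hν (interior_subset (s := integrableExpSet X ν) hv)
  rw [iteratedDeriv_three_cgf hv hν, integral_sub_pow_mul_exp hv, deriv_cgf hv, ← deriv_mgf hv]
  simp_rw [← iteratedDeriv_mgf hv]
  simp only [Finset.sum_range_succ, Finset.sum_range_zero, iteratedDeriv_zero, iteratedDeriv_one,
    Nat.choose, Nat.reduceAdd, Nat.reduceSub, Nat.cast_ofNat, Nat.cast_one]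
  field_simp
  ring

theorem integral_sub_deriv_cgf_zero_pow_three [IsProbabilityMeasure ν]
    (h0 : 0 ∈ interior (integrableExpSet X ν)) :
    ∫ ω, (X ω - deriv (cgf X ν) 0) ^ 3 ∂ν = iteratedDeriv 3 (cgf X ν) 0 := by
  simp [iteratedDeriv_three_cgf_eq_integral h0]

end Cumulants

section LogGamma

/-- The logarithm of the real Gamma function, whose derivatives are the polygamma functions. -/
noncomputable def logGamma (x : ℝ) : ℝ := Real.log (Real.Gamma x)

theorem digamma_eq_iteratedDeriv_logGamma (z : ℝ) : digamma z = iteratedDeriv 1 logGamma z := by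
  rw [iteratedDeriv_one]
  rfl

theorem tetragamma_eq_iteratedDeriv_logGamma (z : ℝ) :
    tetragamma z = iteratedDeriv 3 logGamma z :=
  rfl

theorem analyticAt_Gamma_of_re_pos {z : ℂ} (hz : 0 < z.re) : AnalyticAt ℂ Complex.Gamma z := by
  refine DifferentiableOn.analyticAt (s := {w | 0 < w.re}) (fun w hw => ?_)
    ((isOpen_lt continuous_const Complex.continuous_re).mem_nhds hz)
  refine (Complex.differentiableAt_Gamma w fun k hk => ?_).differentiableWithinAt
  have : w.re = -k := by simp [hk]
  linarith [mem_ofPred.1 hw, k.cast_nonneg (α := ℝ)]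

theorem analyticAt_logGamma {x : ℝ} (hx : 0 < x) : AnalyticAt ℝ logGamma x :=
  AnalyticAt.log (analyticAt_Gamma_of_re_pos (z := x) hx).re_ofReal (Real.Gamma_pos_of_pos hx)

theorem log_beta {a b : ℝ} (ha : 0 < a) (hb : 0 < b) :
    Real.log (beta a b) = logGamma a + logGamma b - logGamma (a + b) := by
  have hΓa := (Real.Gamma_pos_of_pos ha).ne'
  have hΓb := (Real.Gamma_pos_of_pos hb).ne'
  have hΓab := (Real.Gamma_pos_of_pos (add_pos ha hb)).ne'
  rw [beta, Real.log_div (mul_ne_zero hΓa hΓb) hΓab, Real.log_mul hΓa hΓb]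
  rfl

end LogGamma

section Sech

theorem sech_pos (x : ℝ) : 0 < sech x :=
  one_div_pos.2 (Real.cosh_pos x)

theorem measurable_sech : Measurable sech :=
  measurable_const.div Real.measurable_cosh

theorem sigmoid_two_mul (x : ℝ) : Real.sigmoid (2 * x) = sech x / 2 * Real.exp x := by
  have hexp : Real.exp (-(2 * x)) = Real.exp (-x) / Real.exp x := by
    rw [← Real.exp_sub]
    ring_nf
  rw [Real.sigmoid_def, sech, Real.cosh_eq, hexp]
  field_simp

theorem one_sub_sigmoid_two_mul (x : ℝ) :
    1 - Real.sigmoid (2 * x) = sech x / 2 * Real.exp (-x) := by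
  rw [← Real.sigmoid_neg, ← mul_neg, sigmoid_two_mul]
  simp [sech]

theorem sigmoid_rpow_mul_one_sub_sigmoid_rpow (a b x : ℝ) :
    Real.sigmoid (2 * x) ^ a * (1 - Real.sigmoid (2 * x)) ^ b =
      (sech x / 2) ^ (a + b) * Real.exp ((a - b) * x) := by
  have hs : 0 < sech x / 2 := half_pos (sech_pos x)
  rw [one_sub_sigmoid_two_mul, sigmoid_two_mul, Real.mul_rpow hs.le (Real.exp_pos _).le,
    Real.mul_rpow hs.le (Real.exp_pos _).le, ← Real.exp_mul, ← Real.exp_mul, mul_mul_mul_comm,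
    ← Real.rpow_add hs, ← Real.exp_add]
  ring_nf

theorem hasDerivAt_sigmoid_two_mul (x : ℝ) :
    HasDerivAt (fun y => Real.sigmoid (2 * y))
      (2 * (Real.sigmoid (2 * x) * (1 - Real.sigmoid (2 * x)))) x :=
  ((Real.hasDerivAt_sigmoid (2 * x)).comp x ((hasDerivAt_id x).const_mul 2)).congr_deriv (by ring)

theorem injective_sigmoid_two_mul : Function.Injective fun x => Real.sigmoid (2 * x) :=
  Real.sigmoid_injective.comp (mul_right_injective₀ two_ne_zero)

theorem range_sigmoid_two_mul : range (fun x => Real.sigmoid (2 * x)) = Ioo 0 1 := by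
  rw [← Real.range_sigmoid]
  exact (mul_left_surjective₀ two_ne_zero).range_comp Real.sigmoid

end Sech

section BetaLogistic

variable {θ1 θ2 t : ℝ}

theorem betaLogisticPDF_eq (θ1 θ2 x : ℝ) :
    betaLogisticPDF θ1 θ2 x =
      2 ^ (1 - θ1) * sech x ^ θ1 * Real.exp (θ2 * x) /
        beta ((θ1 + θ2) / 2) ((θ1 - θ2) / 2) := by
  have hsum : (θ1 + θ2) / 2 + (θ1 - θ2) / 2 = θ1 := by ring
  rw [betaLogisticPDF, beta, hsum, mul_comm (Real.Gamma ((θ1 - θ2) / 2))]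

theorem betaLogisticPDF_nonneg (h1 : 0 < θ1 + θ2) (h2 : 0 < θ1 - θ2) (x : ℝ) :
    0 ≤ betaLogisticPDF θ1 θ2 x := by
  have := sech_pos x
  have := beta_pos (half_pos h1) (half_pos h2)
  rw [betaLogisticPDF_eq]
  positivity

theorem measurable_betaLogisticPDF (θ1 θ2 : ℝ) : Measurable (betaLogisticPDF θ1 θ2) := by
  have := measurable_sech
  unfold betaLogisticPDF
  fun_prop

theorem betaLogisticPDF_eq_deriv_sigmoid_mul (θ1 θ2 x : ℝ) :
    betaLogisticPDF θ1 θ2 x =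
      2 * (Real.sigmoid (2 * x) * (1 - Real.sigmoid (2 * x))) *
        (1 / beta ((θ1 + θ2) / 2) ((θ1 - θ2) / 2) * Real.sigmoid (2 * x) ^ ((θ1 + θ2) / 2 - 1) *
          (1 - Real.sigmoid (2 * x)) ^ ((θ1 - θ2) / 2 - 1)) := by
  have hs : 0 < Real.sigmoid (2 * x) := Real.sigmoid_pos _
  have hs' : 0 < 1 - Real.sigmoid (2 * x) := sub_pos.2 (Real.sigmoid_lt_one _)
  have hpow := sigmoid_rpow_mul_one_sub_sigmoid_rpow ((θ1 + θ2) / 2) ((θ1 - θ2) / 2) x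
  have hsum : (θ1 + θ2) / 2 + (θ1 - θ2) / 2 = θ1 := by ring
  have hdiff : (θ1 + θ2) / 2 - (θ1 - θ2) / 2 = θ2 := by ring
  rw [hsum, hdiff, Real.div_rpow (sech_pos x).le two_pos.le] at hpow
  rw [betaLogisticPDF_eq, Real.rpow_sub_one hs.ne', Real.rpow_sub_one hs'.ne',
    Real.rpow_sub two_pos, Real.rpow_one]
  calc 2 / 2 ^ θ1 * sech x ^ θ1 * Real.exp (θ2 * x) / beta ((θ1 + θ2) / 2) ((θ1 - θ2) / 2)
      = 2 / beta ((θ1 + θ2) / 2) ((θ1 - θ2) / 2) *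
          (sech x ^ θ1 / 2 ^ θ1 * Real.exp (θ2 * x)) := by ring
    _ = _ := by
      rw [← hpow]
      field_simp

/-- The beta-logistic distribution: if `U` has the beta distribution with parameters
`((θ1 + θ2) / 2, (θ1 - θ2) / 2)`, it is the law of the half-logit `log (U / (1 - U)) / 2`. -/
noncomputable def betaLogisticMeasure (θ1 θ2 : ℝ) : Measure ℝ :=
  volume.withDensity fun x => ENNReal.ofReal (betaLogisticPDF θ1 θ2 x)

theorem lintegral_betaLogisticPDF (h1 : 0 < θ1 + θ2) (h2 : 0 < θ1 - θ2) :
    ∫⁻ x, ENNReal.ofReal (betaLogisticPDF θ1 θ2 x) = 1 := by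
  rw [← lintegral_betaPDF_eq_one (half_pos h1) (half_pos h2), lintegral_betaPDF,
    ← range_sigmoid_two_mul, ← image_univ, lintegral_image_eq_lintegral_abs_deriv_mul .univ
      (fun x _ => (hasDerivAt_sigmoid_two_mul x).hasDerivWithinAt) injective_sigmoid_two_mul.injOn,
    Measure.restrict_univ]
  congr with x
  have hs : 0 < Real.sigmoid (2 * x) := Real.sigmoid_pos _
  have hs' : 0 < 1 - Real.sigmoid (2 * x) := sub_pos.2 (Real.sigmoid_lt_one _)
  rw [betaLogisticPDF_eq_deriv_sigmoid_mul, abs_of_pos (by positivity),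
    ENNReal.ofReal_mul (by positivity)]

theorem isProbabilityMeasure_betaLogisticMeasure (h1 : 0 < θ1 + θ2) (h2 : 0 < θ1 - θ2) :
    IsProbabilityMeasure (betaLogisticMeasure θ1 θ2) where
  measure_univ := by simp [betaLogisticMeasure, lintegral_betaLogisticPDF h1 h2]

theorem integrable_betaLogisticPDF (h1 : 0 < θ1 + θ2) (h2 : 0 < θ1 - θ2) :
    Integrable (betaLogisticPDF θ1 θ2) := by
  rw [← lintegral_ofReal_ne_top_iff_integrable
    (measurable_betaLogisticPDF θ1 θ2).aestronglyMeasurable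
    (ae_of_all _ (betaLogisticPDF_nonneg h1 h2)), lintegral_betaLogisticPDF h1 h2]
  exact ENNReal.one_ne_top

theorem integral_betaLogisticPDF (h1 : 0 < θ1 + θ2) (h2 : 0 < θ1 - θ2) :
    ∫ x, betaLogisticPDF θ1 θ2 x = 1 := by
  rw [integral_eq_lintegral_of_nonneg_ae (ae_of_all _ (betaLogisticPDF_nonneg h1 h2))
    (measurable_betaLogisticPDF θ1 θ2).aestronglyMeasurable, lintegral_betaLogisticPDF h1 h2,
    ENNReal.toReal_one]

theorem integral_betaLogisticMeasure (h1 : 0 < θ1 + θ2) (h2 : 0 < θ1 - θ2) (f : ℝ → ℝ) :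
    ∫ x, f x ∂betaLogisticMeasure θ1 θ2 = ∫ x, f x * betaLogisticPDF θ1 θ2 x := by
  rw [betaLogisticMeasure, integral_withDensity_eq_integral_toReal_smul
    (measurable_betaLogisticPDF θ1 θ2).ennreal_ofReal (by simp)]
  simp [betaLogisticPDF_nonneg h1 h2, mul_comm]

theorem integrable_betaLogisticMeasure_iff (h1 : 0 < θ1 + θ2) (h2 : 0 < θ1 - θ2) {f : ℝ → ℝ} :
    Integrable f (betaLogisticMeasure θ1 θ2) ↔
      Integrable fun x => f x * betaLogisticPDF θ1 θ2 x := by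
  rw [betaLogisticMeasure, integrable_withDensity_iff_integrable_smul'
    (measurable_betaLogisticPDF θ1 θ2).ennreal_ofReal (by simp)]
  simp [betaLogisticPDF_nonneg h1 h2, mul_comm]

theorem exp_mul_betaLogisticPDF_eq (h1 : 0 < θ1 + (θ2 + t)) (h2 : 0 < θ1 - (θ2 + t)) (x : ℝ) :
    Real.exp (t * x) * betaLogisticPDF θ1 θ2 x =
      beta ((θ1 + (θ2 + t)) / 2) ((θ1 - (θ2 + t)) / 2) / beta ((θ1 + θ2) / 2) ((θ1 - θ2) / 2) *
        betaLogisticPDF θ1 (θ2 + t) x := by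
  have := (beta_pos (half_pos h1) (half_pos h2)).ne'
  rw [betaLogisticPDF_eq, betaLogisticPDF_eq, add_mul, Real.exp_add]
  field_simp

theorem mem_integrableExpSet_betaLogisticMeasure (h1 : 0 < θ1 + θ2) (h2 : 0 < θ1 - θ2)
    (h1t : 0 < θ1 + (θ2 + t)) (h2t : 0 < θ1 - (θ2 + t)) :
    t ∈ integrableExpSet id (betaLogisticMeasure θ1 θ2) := by
  refine (integrable_betaLogisticMeasure_iff h1 h2).2 ?_
  simp only [id, exp_mul_betaLogisticPDF_eq h1t h2t]
  exact (integrable_betaLogisticPDF h1t h2t).const_mul _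

theorem mgf_betaLogisticMeasure (h1 : 0 < θ1 + θ2) (h2 : 0 < θ1 - θ2)
    (h1t : 0 < θ1 + (θ2 + t)) (h2t : 0 < θ1 - (θ2 + t)) :
    mgf id (betaLogisticMeasure θ1 θ2) t =
      beta ((θ1 + (θ2 + t)) / 2) ((θ1 - (θ2 + t)) / 2) /
        beta ((θ1 + θ2) / 2) ((θ1 - θ2) / 2) := by
  simp only [mgf, id, integral_betaLogisticMeasure h1 h2, exp_mul_betaLogisticPDF_eq h1t h2t]
  rw [integral_const_mul, integral_betaLogisticPDF h1t h2t, mul_one]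

theorem cgf_betaLogisticMeasure (h1 : 0 < θ1 + θ2) (h2 : 0 < θ1 - θ2)
    (h1t : 0 < θ1 + (θ2 + t)) (h2t : 0 < θ1 - (θ2 + t)) :
    cgf id (betaLogisticMeasure θ1 θ2) t =
      -(logGamma ((θ1 + θ2) / 2) + logGamma ((θ1 - θ2) / 2)) +
        (logGamma ((θ1 + θ2) / 2 + 1 / 2 * t) + logGamma ((θ1 - θ2) / 2 + -1 / 2 * t)) := by
  rw [cgf, mgf_betaLogisticMeasure h1 h2 h1t h2t,
    Real.log_div (beta_pos (half_pos h1t) (half_pos h2t)).ne'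
      (beta_pos (half_pos h1) (half_pos h2)).ne',
    log_beta (half_pos h1t) (half_pos h2t), log_beta (half_pos h1) (half_pos h2)]
  ring_nf

theorem eventually_nhds_zero_add_pos_and_sub_pos (h1 : 0 < θ1 + θ2) (h2 : 0 < θ1 - θ2) :
    ∀ᶠ t in 𝓝 (0 : ℝ), 0 < θ1 + (θ2 + t) ∧ 0 < θ1 - (θ2 + t) :=
  (ContinuousAt.eventually_lt (by fun_prop) (by fun_prop) (by simpa using h1)).and
    (ContinuousAt.eventually_lt (by fun_prop) (by fun_prop) (by simpa using h2))

theorem zero_mem_interior_integrableExpSet_betaLogisticMeasure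
    (h1 : 0 < θ1 + θ2) (h2 : 0 < θ1 - θ2) :
    0 ∈ interior (integrableExpSet id (betaLogisticMeasure θ1 θ2)) :=
  mem_interior_iff_mem_nhds.2 <| (eventually_nhds_zero_add_pos_and_sub_pos h1 h2).mono
    fun _ ht => mem_integrableExpSet_betaLogisticMeasure h1 h2 ht.1 ht.2

theorem iteratedDeriv_cgf_betaLogisticMeasure_zero (h1 : 0 < θ1 + θ2) (h2 : 0 < θ1 - θ2)
    {n : ℕ} (hn : 0 < n) :
    iteratedDeriv n (cgf id (betaLogisticMeasure θ1 θ2)) 0 =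
      (1 / 2) ^ n * iteratedDeriv n logGamma ((θ1 + θ2) / 2) +
        (-1 / 2) ^ n * iteratedDeriv n logGamma ((θ1 - θ2) / 2) := by
  have hcgf : cgf id (betaLogisticMeasure θ1 θ2) =ᶠ[𝓝 0] fun t =>
      -(logGamma ((θ1 + θ2) / 2) + logGamma ((θ1 - θ2) / 2)) +
        (logGamma ((θ1 + θ2) / 2 + 1 / 2 * t) + logGamma ((θ1 - θ2) / 2 + -1 / 2 * t)) :=
    (eventually_nhds_zero_add_pos_and_sub_pos h1 h2).mono fun _ ht =>
      cgf_betaLogisticMeasure h1 h2 ht.1 ht.2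
  have hsmooth {a : ℝ} (ha : 0 < a) (c : ℝ) :
      ContDiffAt ℝ n (fun t => logGamma (a + c * t)) 0 :=
    ContDiffAt.comp (g := logGamma) (f := fun t => a + c * t) 0
      (analyticAt_logGamma (by simpa using ha)).contDiffAt (by fun_prop)
  rw [hcgf.iteratedDeriv_eq, iteratedDeriv_const_add hn,
    iteratedDeriv_fun_add (hsmooth (half_pos h1) _) (hsmooth (half_pos h2) _),
    iteratedDeriv_comp_const_add_mul, iteratedDeriv_comp_const_add_mul]
  simp only [mul_zero, add_zero, smul_eq_mul]

end BetaLogistic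

/-- The third central moment of the beta-logistic distribution is
`(1/8)(ψ''((θ¹+θ²)/2) − ψ''((θ¹−θ²)/2))`, where
`μ = (1/2)(ψ((θ¹+θ²)/2) − ψ((θ¹−θ²)/2))` is the mean. -/
theorem betaLogistic_third_central_moment (θ1 θ2 μ : ℝ) (h1 : 0 < θ1 + θ2) (h2 : 0 < θ1 - θ2)
    (hμ : μ = (1 / 2) * (digamma ((θ1 + θ2) / 2) - digamma ((θ1 - θ2) / 2))) :
    (∫ x : ℝ, (x - μ) ^ 3 * betaLogisticPDF θ1 θ2 x) =
      (1 / 8) * (tetragamma ((θ1 + θ2) / 2) - tetragamma ((θ1 - θ2) / 2)) := by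
  have := isProbabilityMeasure_betaLogisticMeasure h1 h2
  have hmean : μ = deriv (cgf id (betaLogisticMeasure θ1 θ2)) 0 := by
    rw [← iteratedDeriv_one, iteratedDeriv_cgf_betaLogisticMeasure_zero h1 h2 one_pos, hμ,
      digamma_eq_iteratedDeriv_logGamma, digamma_eq_iteratedDeriv_logGamma]
    ring
  calc ∫ x, (x - μ) ^ 3 * betaLogisticPDF θ1 θ2 x
      = ∫ x, (id x - μ) ^ 3 ∂betaLogisticMeasure θ1 θ2 :=
        (integral_betaLogisticMeasure h1 h2 _).symm
    _ = iteratedDeriv 3 (cgf id (betaLogisticMeasure θ1 θ2)) 0 := by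
        rw [hmean, integral_sub_deriv_cgf_zero_pow_three
          (zero_mem_interior_integrableExpSet_betaLogisticMeasure h1 h2)]
    _ = 1 / 8 * (tetragamma ((θ1 + θ2) / 2) - tetragamma ((θ1 - θ2) / 2)) := by
        rw [iteratedDeriv_cgf_betaLogisticMeasure_zero h1 h2 three_pos,
          tetragamma_eq_iteratedDeriv_logGamma, tetragamma_eq_iteratedDeriv_logGamma]
        ring
end

section
/- For every natural number n and every real x, the n-th Bernoulli polynomial satisfies B_n(x) = (π/2) · ∫_{ℝ} (x + i t − 1/2)^n · sech²(π t) dt, where the integral is a convergent complex-valued integral over the real line. -/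
open MeasureTheory

/-- The `n`-th Bernoulli polynomial evaluated at a real `x` (generating function
`Σ Bₙ(x) tⁿ/n! = t e^{xt}/(eᵗ − 1)`). -/
noncomputable def bernoulliPoly (n : ℕ) (x : ℝ) : ℝ :=
  Polynomial.aeval x (Polynomial.bernoulli n)

/-!
For `t > 0`, expanding `sech² t = -4 ∑ (-1)ᵐ m e^{-2mt}` and integrating termwise expresses the
even moments of `sech²` through the alternating zeta values at even integers, which are the Fourier
series of `B₂ₖ` at `1 / 2`. The odd moments and the values `B₂ₖ₊₁(1 / 2)` vanish by symmetry. This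
settles the case `x = 1 / 2`, and the moment formula propagates to every `x` because both sides are
Appell sequences in `x`: the binomial expansion of `((x - 1 / 2) + it)ⁿ` matches the addition
formula for `Bₙ((x - 1 / 2) + 1 / 2)`.
-/

open Set Filter Asymptotics Polynomial
open scoped Topology Nat Real

theorem natDegree_bernoulli_le (n : ℕ) : (Polynomial.bernoulli n).natDegree ≤ n :=
  natDegree_le_iff_coeff_eq_zero.2 fun _ hi ↦ by rw [coeff_bernoulli, if_neg hi.not_ge]

theorem map_hasseDeriv {R S : Type*} [Semiring R] [Semiring S] (f : R →+* S) (k : ℕ) (p : R[X]) :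
    (hasseDeriv k p).map f = hasseDeriv k (p.map f) := by
  ext i
  simp only [coeff_map, hasseDeriv_coeff, map_mul, map_natCast]

theorem hasseDeriv_bernoulli (k n : ℕ) :
    hasseDeriv k (Polynomial.bernoulli n) = n.choose k • Polynomial.bernoulli (n - k) := by
  ext i
  rw [hasseDeriv_coeff, coeff_smul, coeff_bernoulli, coeff_bernoulli, nsmul_eq_mul]
  by_cases h : i + k ≤ n
  · have hchoose : (n.choose (i + k) * (i + k).choose k : ℚ) = n.choose k * (n - k).choose i := by
      have := Nat.choose_mul (n := n) (Nat.le_add_left k i)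
      rw [Nat.add_sub_cancel] at this
      exact_mod_cast this
    rw [if_pos h, if_pos (by lia), Nat.sub_add_eq, Nat.sub_right_comm]
    linear_combination _root_.bernoulli (n - k - i) * hchoose
  · obtain hk | hk := le_or_gt k n
    · simp [h, show ¬ i ≤ n - k by lia]
    · simp [h, Nat.choose_eq_zero_of_lt hk]

theorem aeval_bernoulli_add {A : Type*} [CommRing A] [Algebra ℚ A] (x y : A) (n : ℕ) :
    aeval (x + y) (Polynomial.bernoulli n) =
      ∑ k ∈ Finset.range (n + 1), x ^ k * aeval y (Polynomial.bernoulli (n - k)) * n.choose k := by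
  have hdeg : (taylor y ((Polynomial.bernoulli n).map (algebraMap ℚ A))).natDegree < n + 1 := by
    rw [natDegree_taylor, Nat.lt_succ_iff]
    exact natDegree_map_le.trans (natDegree_bernoulli_le n)
  rw [← eval_map_algebraMap, ← taylor_eval, eval_eq_sum_range' hdeg]
  refine Finset.sum_congr rfl fun k _ ↦ ?_
  rw [taylor_coeff, ← map_hasseDeriv, hasseDeriv_bernoulli, eval_map_algebraMap, map_nsmul,
    nsmul_eq_mul]
  ring

theorem aeval_bernoulli_half_of_odd {K : Type*} [Field K] [Algebra ℚ K] {n : ℕ} (hn : Odd n) :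
    aeval (1 / 2 : K) (Polynomial.bernoulli n) = 0 := by
  have : CharZero K := algebraRat.charZero K
  have hreflect := congrArg (aeval (1 / 2 : K)) (bernoulli_comp_one_sub_X n)
  rw [aeval_comp, hn.neg_one_pow] at hreflect
  simp only [map_sub, map_one, aeval_X, map_neg, neg_one_mul, sub_half] at hreflect
  exact self_eq_neg.1 hreflect

theorem sech_neg (t : ℝ) : sech (-t) = sech t := by
  rw [sech, sech, Real.cosh_neg]

theorem sech_abs (t : ℝ) : sech |t| = sech t := by
  rw [sech, sech, Real.cosh_abs]

theorem sech_nonneg (t : ℝ) : 0 ≤ sech t :=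
  one_div_nonneg.2 (Real.cosh_pos t).le

theorem continuous_sech : Continuous sech :=
  continuous_const.div Real.continuous_cosh fun t ↦ (Real.cosh_pos t).ne'

theorem sech_le_two_mul_exp_neg (t : ℝ) : sech t ≤ 2 * Real.exp (-t) := by
  rw [sech, Real.cosh_eq, one_div_div, div_le_iff₀ (by positivity), mul_assoc, mul_add,
    ← Real.exp_add, neg_add_cancel, Real.exp_zero]
  nlinarith [Real.exp_pos (-t)]

theorem sech_sq_eq_exp (t : ℝ) :
    sech t ^ 2 = 4 * Real.exp (-2 * t) / (1 + Real.exp (-2 * t)) ^ 2 := by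
  have hexp : Real.exp (-2 * t) = Real.exp (-t) ^ 2 := by
    rw [← Real.exp_nat_mul]; congr 1; push_cast; ring
  have hmul : Real.exp t * Real.exp (-t) = 1 := by
    rw [← Real.exp_add, add_neg_cancel, Real.exp_zero]
  have hsech : sech t = 2 * Real.exp (-t) / (1 + Real.exp (-t) ^ 2) := by
    rw [sech, Real.cosh_eq, one_div_div, div_eq_div_iff (by positivity) (by positivity)]
    linear_combination -2 * hmul
  rw [hsech, hexp, div_pow, mul_pow]
  norm_num

theorem hasDerivAt_tanh (t : ℝ) : HasDerivAt Real.tanh (sech t ^ 2) t := by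
  have hquot := (Real.hasDerivAt_sinh t).div (Real.hasDerivAt_cosh t) (Real.cosh_pos t).ne'
  rw [← sq, ← sq, Real.cosh_sq, add_sub_cancel_left, ← Real.cosh_sq, ← one_pow 2, ← div_pow]
    at hquot
  exact hquot.congr_of_eventuallyEq (.of_forall Real.tanh_eq_sinh_div_cosh)

theorem tendsto_tanh_atTop : Tendsto Real.tanh atTop (𝓝 1) := by
  have htanh (t : ℝ) : Real.tanh t = 1 - 2 * (Real.exp (2 * t) + 1)⁻¹ := by
    rw [Real.tanh_eq, Real.exp_neg, two_mul t, Real.exp_add]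
    field_simp
    ring
  have hexp : Tendsto (fun t : ℝ ↦ (Real.exp (2 * t) + 1)⁻¹) atTop (𝓝 0) :=
    (tendsto_atTop_add_const_right _ _ <| Real.tendsto_exp_atTop.comp <|
      tendsto_id.const_mul_atTop two_pos).inv_tendsto_atTop
  simpa only [← htanh, mul_zero, sub_zero] using (hexp.const_mul 2).const_sub 1

theorem tendsto_tanh_atBot : Tendsto Real.tanh atBot (𝓝 (-1)) := by
  simpa [Function.comp_def] using (tendsto_tanh_atTop.comp tendsto_neg_atBot_atTop).neg

theorem integrable_pow_mul_sech_sq (n : ℕ) : Integrable fun t : ℝ ↦ t ^ n * sech t ^ 2 := by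
  have hcont : Continuous fun t : ℝ ↦ t ^ n * sech t ^ 2 :=
    (continuous_pow n).mul (continuous_sech.pow 2)
  have hsech : (fun t ↦ sech t ^ 2) =O[atTop] fun t ↦ Real.exp (-t) ^ 2 :=
    IsBigO.pow (.of_bound 2 <| .of_forall fun t ↦ by
      simpa only [Real.norm_of_nonneg (sech_nonneg t), Real.norm_of_nonneg (Real.exp_pos (-t)).le]
        using sech_le_two_mul_exp_neg t) 2
  have hdecay : (fun t : ℝ ↦ t ^ n * sech t ^ 2) =O[atTop] fun t ↦ Real.exp (-t) :=
    (Real.isLittleO_pow_exp_atTop.isBigO.mul hsech).congr_right fun t ↦ by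
      rw [sq, ← mul_assoc, ← Real.exp_add, add_neg_cancel, Real.exp_zero, one_mul]
  refine hcont.locallyIntegrable.integrable_of_isBigO_atTop_of_norm_isNegInvariant
    (.of_forall fun t ↦ ?_) hdecay ⟨Ioi 0, Ioi_mem_atTop 0, integrableOn_exp_neg_Ioi 0⟩
  simp [sech_neg]

theorem integral_sech_sq : ∫ t : ℝ, sech t ^ 2 = 2 := by
  have hint : Integrable fun t : ℝ ↦ sech t ^ 2 := by simpa using integrable_pow_mul_sech_sq 0
  rw [integral_of_hasDerivAt_of_tendsto hasDerivAt_tanh hint tendsto_tanh_atBot tendsto_tanh_atTop]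
  norm_num

theorem hasSum_sech_sq {t : ℝ} (ht : 0 < t) :
    HasSum (fun m : ℕ ↦ -4 * (-1) ^ m * m * Real.exp (-(2 * m) * t)) (sech t ^ 2) := by
  have hq : ‖-Real.exp (-2 * t)‖ < 1 := by
    rw [norm_neg, Real.norm_of_nonneg (Real.exp_pos _).le, Real.exp_lt_one_iff]
    linarith
  convert! (hasSum_coe_mul_geometric_of_norm_lt_one hq).mul_left (-4) using 1
  · ext m
    rw [neg_pow (Real.exp _), ← Real.exp_nat_mul]
    ring_nf
  · rw [sech_sq_eq_exp]
    ring

theorem hasSum_mellin_sech_sq {s : ℂ} (hs : 2 < s.re) :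
    HasSum (fun m : ℕ ↦ Complex.Gamma s * (-4 * (-1) ^ m * m) / (2 * m) ^ s)
      (mellin (fun t ↦ ((sech t ^ 2 : ℝ) : ℂ)) s) := by
  have hnorm (m : ℕ) : ‖(-4 * (-1) ^ m * m : ℂ)‖ / (2 * m : ℝ) ^ s.re =
      4 / 2 ^ s.re * (1 / (m : ℝ) ^ (s.re - 1)) := by
    obtain rfl | hm := m.eq_zero_or_pos
    · simp [Real.zero_rpow (show s.re - 1 ≠ 0 by linarith)]
    · rw [Real.mul_rpow two_pos.le m.cast_nonneg, Real.rpow_sub_one (by positivity)]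
      simp only [neg_mul, norm_neg, Complex.norm_mul, Complex.norm_ofNat, norm_pow, norm_one,
        one_pow, mul_one, RCLike.norm_natCast, one_div, inv_div]
      field_simp
  exact_mod_cast hasSum_mellin (a := fun m : ℕ ↦ -4 * (-1) ^ m * m) (p := fun m ↦ 2 * m)
    (fun m ↦ by simpa using m.eq_zero_or_pos) (by linarith)
    (fun t ht ↦ by exact_mod_cast Complex.hasSum_ofReal.2 (hasSum_sech_sq ht))
    (by simpa only [hnorm] using
      (Real.summable_one_div_nat_rpow.2 (by linarith)).mul_left (4 / 2 ^ s.re))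

theorem hasSum_integral_pow_mul_sech_sq {n : ℕ} (hn : 2 ≤ n) :
    HasSum (fun m : ℕ ↦ -4 * n ! / 2 ^ (n + 1) * (1 / (m : ℝ) ^ n * (-1) ^ m))
      (∫ t in Ioi (0 : ℝ), t ^ n * sech t ^ 2) := by
  have hmellin := hasSum_mellin_sech_sq (s := n + 1) (by
    have : (2 : ℝ) ≤ n := by exact_mod_cast hn
    simpa using by linarith)
  have hintegral : mellin (fun t ↦ ((sech t ^ 2 : ℝ) : ℂ)) (n + 1) =
      ((∫ t in Ioi (0 : ℝ), t ^ n * sech t ^ 2 : ℝ) : ℂ) := by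
    rw [mellin, ← integral_complex_ofReal]
    simp
  rw [hintegral] at hmellin
  rw [← Complex.hasSum_ofReal]
  convert! hmellin using 2 with m
  obtain rfl | hm := m.eq_zero_or_pos
  · simp [show n ≠ 0 by lia]
  · have hcpow : (2 * m : ℂ) ^ (n + 1 : ℂ) = (2 * m) ^ (n + 1) := by
      exact_mod_cast Complex.cpow_natCast (2 * m : ℂ) (n + 1)
    rw [Complex.Gamma_nat_eq_factorial, hcpow, mul_pow, pow_succ (m : ℂ)]
    have : (m : ℂ) ≠ 0 := by exact_mod_cast hm.ne'
    push_cast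
    field_simp

theorem integral_pow_mul_sech_sq_of_even {n : ℕ} (hn : Even n) :
    ∫ t : ℝ, t ^ n * sech t ^ 2 = 2 * ∫ t in Ioi (0 : ℝ), t ^ n * sech t ^ 2 := by
  simpa only [hn.pow_abs, sech_abs] using integral_comp_abs (f := fun t ↦ t ^ n * sech t ^ 2)

theorem integral_pow_mul_sech_sq_of_odd {n : ℕ} (hn : Odd n) :
    ∫ t : ℝ, t ^ n * sech t ^ 2 = 0 := by
  have hneg := integral_neg_eq_self (fun t : ℝ ↦ t ^ n * sech t ^ 2) volume
  simp only [hn.neg_pow, sech_neg, neg_mul, integral_neg] at hneg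
  exact neg_eq_self.1 hneg

theorem integral_pow_two_mul_mul_sech_sq (k : ℕ) :
    ∫ t : ℝ, t ^ (2 * k) * sech t ^ 2 =
      2 * (-1) ^ k * π ^ (2 * k) * aeval (1 / 2 : ℝ) (Polynomial.bernoulli (2 * k)) := by
  obtain rfl | hk := eq_or_ne k 0
  · simp [integral_sech_sq]
  have hzeta := hasSum_one_div_nat_pow_mul_cos hk (x := 1 / 2) (by constructor <;> norm_num)
  have hcos (m : ℕ) : Real.cos (2 * π * m * (1 / 2)) = (-1) ^ m := by
    rw [← Real.cos_nat_mul_pi]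
    ring_nf
  simp only [hcos, eval_map_algebraMap] at hzeta
  rw [integral_pow_mul_sech_sq_of_even (even_two_mul k),
    (hasSum_integral_pow_mul_sech_sq (by lia)).unique (hzeta.mul_left _)]
  field_simp
  ring

theorem integrable_mul_pow_mul_sech_sq (b : ℂ) (n : ℕ) :
    Integrable fun t : ℝ ↦ (b * t) ^ n * ((sech t ^ 2 : ℝ) : ℂ) := by
  have hreal : Integrable fun t : ℝ ↦ ((t ^ n * sech t ^ 2 : ℝ) : ℂ) :=
    (integrable_pow_mul_sech_sq n).ofReal
  simpa [mul_pow, mul_assoc] using hreal.const_mul (b ^ n)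

theorem integral_mul_pow_mul_sech_sq (b : ℂ) (n : ℕ) :
    ∫ t : ℝ, (b * t) ^ n * ((sech t ^ 2 : ℝ) : ℂ) =
      b ^ n * ((∫ t : ℝ, t ^ n * sech t ^ 2 : ℝ) : ℂ) := by
  rw [← integral_complex_ofReal, ← integral_const_mul]
  simp only [mul_pow, mul_assoc, Complex.ofReal_mul, Complex.ofReal_pow]

theorem add_mul_pow_mul_sech_sq (a b : ℂ) (n : ℕ) (t : ℝ) :
    (a + b * t) ^ n * ((sech t ^ 2 : ℝ) : ℂ) = ∑ k ∈ Finset.range (n + 1),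
      a ^ k * n.choose k * ((b * t) ^ (n - k) * ((sech t ^ 2 : ℝ) : ℂ)) := by
  rw [add_pow, Finset.sum_mul]
  exact Finset.sum_congr rfl fun k _ ↦ by ring

theorem integrable_add_mul_pow_mul_sech_sq (a b : ℂ) (n : ℕ) :
    Integrable fun t : ℝ ↦ (a + b * t) ^ n * ((sech t ^ 2 : ℝ) : ℂ) := by
  simp only [add_mul_pow_mul_sech_sq]
  exact integrable_finsetSum _ fun k _ ↦ (integrable_mul_pow_mul_sech_sq b (n - k)).const_mul _

theorem integral_I_div_pi_mul_pow_mul_sech_sq (n : ℕ) :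
    ∫ t : ℝ, (Complex.I / π * t) ^ n * ((sech t ^ 2 : ℝ) : ℂ) =
      2 * aeval (1 / 2 : ℂ) (Polynomial.bernoulli n) := by
  rw [integral_mul_pow_mul_sech_sq]
  obtain ⟨k, rfl | hn⟩ := n.even_or_odd'
  · have hcast : ((aeval (1 / 2 : ℝ) (Polynomial.bernoulli (2 * k)) : ℝ) : ℂ) =
        aeval (1 / 2 : ℂ) (Polynomial.bernoulli (2 * k)) := by
      simpa using (aeval_algebraMap_apply ℂ (1 / 2 : ℝ) _).symm
    have hpow : (Complex.I / π) ^ (2 * k) * ((-1) ^ k * π ^ (2 * k)) = 1 := by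
      have hpi : (π : ℂ) ≠ 0 := by exact_mod_cast Real.pi_ne_zero
      rw [pow_mul, pow_mul, ← mul_pow, ← mul_pow, div_pow, Complex.I_sq, neg_one_mul, mul_neg,
        div_mul_cancel₀ _ (pow_ne_zero 2 hpi), neg_neg, one_pow]
    rw [integral_pow_two_mul_mul_sech_sq]
    push_cast
    rw [hcast]
    linear_combination 2 * aeval (1 / 2 : ℂ) (Polynomial.bernoulli (2 * k)) * hpow
  · rw [integral_pow_mul_sech_sq_of_odd ⟨k, hn⟩, aeval_bernoulli_half_of_odd ⟨k, hn⟩,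
      Complex.ofReal_zero, mul_zero, mul_zero]

theorem integral_add_I_div_pi_mul_pow_mul_sech_sq (a : ℂ) (n : ℕ) :
    ∫ t : ℝ, (a + Complex.I / π * t) ^ n * ((sech t ^ 2 : ℝ) : ℂ) =
      2 * aeval (a + 1 / 2) (Polynomial.bernoulli n) := by
  simp only [add_mul_pow_mul_sech_sq]
  rw [integral_finsetSum _ fun k _ ↦ (integrable_mul_pow_mul_sech_sq _ (n - k)).const_mul _,
    aeval_bernoulli_add, Finset.mul_sum]
  refine Finset.sum_congr rfl fun k _ ↦ ?_
  rw [integral_const_mul, integral_I_div_pi_mul_pow_mul_sech_sq]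
  ring

theorem bernoulliPoly_eq_moment_general (n : ℕ) (z : ℂ) :
    Integrable (fun t : ℝ ↦ (z + Complex.I * t - 1 / 2) ^ n * ((sech (π * t) ^ 2 : ℝ) : ℂ)) ∧
    aeval z (Polynomial.bernoulli n) =
      π / 2 * ∫ t : ℝ, (z + Complex.I * t - 1 / 2) ^ n * ((sech (π * t) ^ 2 : ℝ) : ℂ) := by
  let g (u : ℝ) : ℂ := (z - 1 / 2 + Complex.I / π * u) ^ n * ((sech u ^ 2 : ℝ) : ℂ)
  have hsubst (t : ℝ) :
      (z + Complex.I * t - 1 / 2) ^ n * ((sech (π * t) ^ 2 : ℝ) : ℂ) = g (π * t) := by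
    have hpi : (π : ℂ) ≠ 0 := by exact_mod_cast Real.pi_ne_zero
    have hbase : z - 1 / 2 + Complex.I / π * (π * t : ℝ) = z + Complex.I * t - 1 / 2 := by
      push_cast
      field_simp
      ring
    rw [← hbase]
  have hint : Integrable g := integrable_add_mul_pow_mul_sech_sq _ _ n
  simp only [hsubst]
  refine ⟨hint.comp_mul_left' Real.pi_ne_zero, ?_⟩
  rw [Measure.integral_comp_mul_left, abs_of_pos (inv_pos.2 Real.pi_pos), Complex.real_smul,
    integral_add_I_div_pi_mul_pow_mul_sech_sq, sub_add_cancel, Complex.ofReal_inv]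
  field_simp

/-- The Bernoulli polynomials as moments: for all `n : ℕ` and `x : ℝ`,
`Bₙ(x) = (π/2) ∫ (x + it − 1/2)ⁿ sech²(πt) dt`, the integral being convergent. -/
theorem bernoulliPoly_eq_moment (n : ℕ) (x : ℝ) :
    Integrable (fun t : ℝ =>
      ((x : ℂ) + Complex.I * t - 1 / 2) ^ n * ((sech (Real.pi * t) ^ 2 : ℝ) : ℂ)) ∧
    (bernoulliPoly n x : ℂ) =
      (Real.pi : ℂ) / 2 *
        ∫ t : ℝ, ((x : ℂ) + Complex.I * t - 1 / 2) ^ n * ((sech (Real.pi * t) ^ 2 : ℝ) : ℂ) := by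
  have hcast : (bernoulliPoly n x : ℂ) = aeval (x : ℂ) (Polynomial.bernoulli n) :=
    (aeval_algebraMap_apply ℂ x _).symm
  exact hcast ▸ bernoulliPoly_eq_moment_general n x
end
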